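/- Let D ⊂ ℝᴺ be an open convex set and w : D → ℝ a convex function. Assume that for some x₀ ∈ D the function w admits the second-order expansion w(x) = w(x₀) + ⟨p₀, x − x₀⟩ + (1/2)·⟨A(x − x₀), x − x₀⟩ + o(‖x − x₀‖²) as x → x₀, for some p₀ ∈ ℝᴺ and a symmetric N × N real matrix A. Then the subgradients of w admit the uniform first-order approximation: for every ε > 0 there is δ > 0 such that for all x ∈ D with 0 < ‖x − x₀‖ < δ and all p ∈ ∂w(x), one has ‖p − p₀ − A(x − x₀)‖ ≤ ε·‖x − x₀‖. -/

import Mathlib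

/-!
Put `h = x - x₀`, `r = ‖h‖`, `q = p - p₀ - A h`, and let `R` be the remainder of the expansion.
Inserting the expansions at `x + v` and at `x` into the subgradient inequality
`⟪p, v⟫ ≤ w (x + v) - w x` cancels everything that does not depend on `v`, and leaves, `A` being
symmetric,
`⟪q, v⟫ ≤ ⟪A v, v⟫ / 2 + R (x + v) - R x`.
For `v` of length `t r`, `t ≤ 1`, in the direction of `q`, with `|R| ≤ c ‖· - x₀‖²` near `x₀`,
this reads `t r ‖q‖ ≤ (‖A‖ t² / 2 + 5 c) r²`, that is `‖q‖ ≤ (‖A‖ t / 2 + 5 c / t) r`.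
First `t` is chosen small in terms of `ε`, then `c` small in terms of `ε` and `t`.
The argument is carried out in an arbitrary real inner product space and then read off in
coordinates.
-/

open Filter Topology Asymptotics

/-- Coordinate-free version, for a symmetric bounded operator `T` on a real inner
product space and an open set `D` containing `x₀`; `p` is a subgradient of `w` on `D` at `x`. -/
lemma norm_subgradient_sub_le {E : Type*} [NormedAddCommGroup E] [InnerProductSpace ℝ E]
    {D : Set E} (hD : IsOpen D) {w : E → ℝ} {x₀ : E} (hx₀ : x₀ ∈ D) (p₀ : E) (T : E →L[ℝ] E)
    (hT : ∀ x y, inner ℝ (T x) y = inner ℝ x (T y))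
    (hexp : (fun x => w x - w x₀ - inner ℝ p₀ (x - x₀)
        - (1 / 2) * inner ℝ (T (x - x₀)) (x - x₀)) =o[𝓝 x₀] fun x => ‖x - x₀‖ ^ 2)
    {ε : ℝ} (hε : 0 < ε) :
    ∃ δ > (0 : ℝ), ∀ x, 0 < ‖x - x₀‖ → ‖x - x₀‖ < δ →
      ∀ p : E, (∀ z ∈ D, w x + inner ℝ p (z - x) ≤ w z) →
        ‖p - p₀ - T (x - x₀)‖ ≤ ε * ‖x - x₀‖ := by
  -- The `+ 1` keeps the denominator of `t` positive when `T = 0`.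
  set C : ℝ := ‖T‖ + 1 with hC
  have hC0 : 0 < C := by positivity
  obtain ⟨t, ht0, ht1, htC⟩ : ∃ t : ℝ, 0 < t ∧ t ≤ 1 ∧ C * t ≤ ε := by
    refine ⟨min 1 (ε / C), by positivity, min_le_left _ _, ?_⟩
    calc C * min 1 (ε / C) ≤ C * (ε / C) := by gcongr; exact min_le_right _ _
      _ = ε := by field_simp
  -- With this bound on the remainders, `5 c / t = ε / 2`.
  have hc : 0 < t * ε / 10 := by positivity
  obtain ⟨δ, hδ, hball⟩ := Metric.eventually_nhds_iff.1
    ((hexp.def hc).and (hD.mem_nhds hx₀))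
  -- Halving `δ` keeps `x + v` in the ball, since `‖v‖ ≤ ‖x - x₀‖`.
  refine ⟨δ / 2, by positivity, fun x hx hxδ p hp => ?_⟩
  set h := x - x₀ with hh
  set r := ‖h‖ with hr
  set q := p - p₀ - T h with hq
  rcases eq_or_ne q 0 with hq0 | hq0
  · rw [hq0, norm_zero]; positivity
  have hqn : 0 < ‖q‖ := norm_pos_iff.2 hq0
  obtain ⟨v, hv, hqv⟩ : ∃ v : E, ‖v‖ = t * r ∧ inner ℝ q v = t * r * ‖q‖ := by
    refine ⟨(t * r / ‖q‖) • q, ?_, ?_⟩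
    · rw [norm_smul, Real.norm_of_nonneg (by positivity)]; field_simp
    · rw [inner_smul_right, real_inner_self_eq_norm_sq]; field_simp
  have hhv : x + v - x₀ = h + v := by rw [hh]; abel
  have hnhv : ‖h + v‖ ≤ 2 * r := by
    have := norm_add_le h v
    nlinarith
  obtain ⟨hRx, -⟩ := @hball x (by rw [dist_eq_norm]; linarith)
  obtain ⟨hRz, hzD⟩ := @hball (x + v) (by rw [dist_eq_norm, hhv]; linarith)
  have hsub := hp _ hzD
  rw [hhv, norm_pow, norm_norm, Real.norm_eq_abs, abs_le] at hRz
  rw [← hh, norm_pow, norm_norm, Real.norm_eq_abs, abs_le, ← hr] at hRx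
  have hsq : ‖h + v‖ ^ 2 ≤ 4 * r ^ 2 := by nlinarith [norm_nonneg (h + v)]
  have hRz' : t * ε / 10 * ‖h + v‖ ^ 2 ≤ t * ε / 10 * (4 * r ^ 2) := by gcongr
  have hTv : inner ℝ (T v) v ≤ C * (t * r) ^ 2 := by
    calc inner ℝ (T v) v ≤ ‖T v‖ * ‖v‖ := real_inner_le_norm _ _
      _ ≤ (‖T‖ * ‖v‖) * ‖v‖ := by gcongr; exact T.le_opNorm v
      _ ≤ C * (t * r) ^ 2 := by rw [hv]; nlinarith [sq_nonneg (t * r)]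
  have hsymm : inner ℝ (T v) h = inner ℝ (T h) v := by rw [hT, real_inner_comm]
  rw [add_sub_cancel_left] at hsub
  rw [hq, inner_sub_left, inner_sub_left] at hqv
  simp only [map_add, inner_add_left, inner_add_right] at hRz
  have key : t * r * ‖q‖ ≤ 1 / 2 * (C * (t * r) ^ 2) + t * ε / 2 * r ^ 2 := by
    linarith [hRz.2, hRx.1]
  have hfin : t * r * ‖q‖ ≤ t * r * (ε * r) := by
    have : C * t * (t * r ^ 2) ≤ ε * (t * r ^ 2) := by gcongr
    linarith
  exact le_of_mul_le_mul_left hfin (by positivity)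

/-- Assertion (86) in the proof of Lemma 8 of Kramkov–Sîrbu: if a convex function `w`
admits a second-order expansion at `x₀`, then its subgradients admit the uniform
first-order approximation `p ≈ p₀ + A(x - x₀)`. -/
theorem subgradient_first_order_approximation
    {N : ℕ} (D : Set (EuclideanSpace ℝ (Fin N))) (hD_open : IsOpen D)
    (hD_conv : Convex ℝ D) (w : EuclideanSpace ℝ (Fin N) → ℝ)
    (hw : ConvexOn ℝ D w) (x₀ : EuclideanSpace ℝ (Fin N)) (hx₀ : x₀ ∈ D)
    (p₀ : EuclideanSpace ℝ (Fin N)) (A : Matrix (Fin N) (Fin N) ℝ) (hA : A.IsSymm)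
    (hexp : (fun x => w x - w x₀ - ∑ i, p₀ i * (x i - x₀ i)
        - (1 / 2) * ∑ i, A.mulVec (fun j => x j - x₀ j) i * (x i - x₀ i))
      =o[𝓝 x₀] fun x => ‖x - x₀‖ ^ 2) :
    ∀ ε > (0 : ℝ), ∃ δ > (0 : ℝ), ∀ x ∈ D, 0 < ‖x - x₀‖ → ‖x - x₀‖ < δ →
      ∀ p : EuclideanSpace ℝ (Fin N),
        (∀ z ∈ D, w x + ∑ i, p i * (z i - x i) ≤ w z) →
        Real.sqrt (∑ i, (p i - p₀ i - A.mulVec (fun j => x j - x₀ j) i) ^ 2)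
          ≤ ε * ‖x - x₀‖ := by
  intro ε hε
  have hinner (a b : EuclideanSpace ℝ (Fin N)) : inner ℝ a b = ∑ i, a i * b i := by
    simp [PiLp.inner_apply, mul_comm]
  set T : EuclideanSpace ℝ (Fin N) →L[ℝ] EuclideanSpace ℝ (Fin N) :=
    Matrix.toEuclideanCLM (𝕜 := ℝ) A with hTdef
  have hTapp (y : EuclideanSpace ℝ (Fin N)) (i : Fin N) :
      T y i = A.mulVec (fun j => y j) i := rfl
  have hT (x y : EuclideanSpace ℝ (Fin N)) : inner ℝ (T x) y = inner ℝ x (T y) := by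
    simp only [hinner, hTapp]
    change A.mulVec x.ofLp ⬝ᵥ y.ofLp = x.ofLp ⬝ᵥ A.mulVec y.ofLp
    rw [Matrix.dotProduct_mulVec, ← Matrix.mulVec_transpose, hA.eq]
  obtain ⟨δ, hδ, H⟩ := norm_subgradient_sub_le (w := w) hD_open hx₀ p₀ T hT
    (by simpa only [hinner, hTapp, PiLp.sub_apply] using hexp) hε
  refine ⟨δ, hδ, fun x _ hx hxδ p hp => ?_⟩
  have := H x hx hxδ p (by simpa only [hinner, PiLp.sub_apply] using hp)
  rw [EuclideanSpace.norm_eq] at this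
  simpa only [Real.norm_eq_abs, sq_abs, hTapp, PiLp.sub_apply] using this
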